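/- Let d ≥ 2 and let A : ℝ^d → ℝ^d be smooth and bounded. For s ≥ 0 set A_s(y) := e^{s/2} A(e^{s/2} y) and define, for ψ ∈ C_c^∞(ℝ^d, ℂ), the quadratic forms l_s[ψ] := ∫_{ℝ^d} |∇ψ(y) − iA_s(y)ψ(y)|² dy − ((d−2)/2)² ∫_{ℝ^d} |ψ(y)|²/|y|² dy + (1/16) ∫_{ℝ^d} |y|² |ψ(y)|² dy and l[ψ] := ∫_{ℝ^d} |∇ψ(y)|² dy − ((d−2)/2)² ∫_{ℝ^d} |ψ(y)|²/|y|² dy + (1/16) ∫_{ℝ^d} |y|² |ψ(y)|² dy. Then both l_s[ψ] and l[ψ] are nonnegative, and for every s ≥ 0 there is a constant C_s ≥ 1 such that for all ψ ∈ C_c^∞(ℝ^d, ℂ): C_s^{−2} ( l[ψ] + ∫ |ψ|² ) ≤ l_s[ψ] + ∫ |ψ|² ≤ C_s² ( l[ψ] + ∫ |ψ|² ). -/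

import Mathlib

open MeasureTheory Real

/-- The quadratic form `l_s[ψ]` of the operator `(−i∇ − A_s)² − c_d/|y|² + |y|²/16`
with the singularly scaled potential `A_s(y) := e^{s/2} A(e^{s/2} y)`. -/
noncomputable def lsForm (d : ℕ)
    (A : EuclideanSpace ℝ (Fin d) → EuclideanSpace ℝ (Fin d)) (s : ℝ)
    (ψ : EuclideanSpace ℝ (Fin d) → ℂ) : ℝ :=
  (∫ y, ∑ j, ‖fderiv ℝ ψ y (EuclideanSpace.single j (1:ℝ))
      - Complex.I * (Real.exp (s/2) * A (Real.exp (s/2) • y) j : ℝ) * ψ y‖ ^ 2)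
  - ((d - 2 : ℝ)/2)^2 * (∫ y, ‖ψ y‖^2 / ‖y‖^2)
  + (1/16 : ℝ) * ∫ y, ‖y‖^2 * ‖ψ y‖^2

/-- A compactly supported continuous function divided by `‖y‖²` is integrable in dimension at least
three. -/
theorem integrable_div_norm_sq {E : Type*} [NormedAddCommGroup E] [NormedSpace ℝ E]
    [FiniteDimensional ℝ E] [MeasurableSpace E] [BorelSpace E] {μ : Measure E}
    [μ.IsAddHaarMeasure] (hE : 3 ≤ Module.finrank ℝ E) {g : E → ℝ} (hg : Continuous g)
    (hgc : HasCompactSupport g) : Integrable (fun y => g y / ‖y‖ ^ 2) μ := by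
  have : Nontrivial E := Module.nontrivial_of_finrank_pos (R := ℝ) (by omega)
  obtain ⟨R, hR⟩ := hgc.isCompact.isBounded.exists_norm_le
  obtain ⟨M, hM⟩ := hgc.exists_bound_of_continuous hg
  have hdom : Integrable (fun y : E => (Set.Ioc 0 R).indicator (fun r => (r ^ 2)⁻¹) ‖y‖) μ := by
    rw [integrable_fun_norm_addHaar μ (f := (Set.Ioc 0 R).indicator (fun r => (r ^ 2)⁻¹))]
    have hcont : IntegrableOn (fun r : ℝ => r ^ (Module.finrank ℝ E - 3)) (Set.Ioc 0 R) :=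
      ((continuous_pow _).integrableOn_Icc).mono_set Set.Ioc_subset_Icc_self
    refine (hcont.integrable_indicator measurableSet_Ioc).integrableOn.congr_fun
      (fun r hr => ?_) measurableSet_Ioi
    have hr0 : r ≠ 0 := (Set.mem_Ioi.1 hr).ne'
    by_cases h : r ∈ Set.Ioc 0 R
    · simp only [Set.indicator_of_mem h, smul_eq_mul]
      rw [show Module.finrank ℝ E - 1 = Module.finrank ℝ E - 3 + 2 by omega, pow_add]
      field_simp
    · simp [Set.indicator_of_notMem h]
  refine (hdom.const_mul M).mono'
    (hg.measurable.div (measurable_norm.pow_const 2)).aestronglyMeasurable ?_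
  filter_upwards with y
  have hM0 : 0 ≤ M := (norm_nonneg _).trans (hM 0)
  by_cases hy : g y = 0
  · simp only [hy, zero_div, norm_zero]
    exact mul_nonneg hM0 (Set.indicator_nonneg (fun r _ => by positivity) _)
  · by_cases hy0 : y = 0
    · simp [hy0]
    · have hmem : ‖y‖ ∈ Set.Ioc 0 R := ⟨norm_pos_iff.2 hy0, hR y (subset_tsupport g hy)⟩
      rw [Set.indicator_of_mem hmem, norm_div, norm_pow, norm_norm, div_eq_mul_inv]
      gcongr
      exact hM y

theorem ContinuousLinearMap.apply_eq_sum_single {ι F : Type*} [Fintype ι] [DecidableEq ι]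
    [NormedAddCommGroup F] [NormedSpace ℝ F] (L : EuclideanSpace ℝ ι →L[ℝ] F)
    (y : EuclideanSpace ℝ ι) : L y = ∑ j, y j • L (EuclideanSpace.single j 1) := by
  conv_lhs => rw [← (EuclideanSpace.basisFun ι ℝ).sum_repr y, map_sum]
  simp

/-- Integration by parts against the smooth vector field `y / (‖y‖² + ε)`. -/
theorem integral_fderiv_self_div_norm_sq_add {d : ℕ} {f : EuclideanSpace ℝ (Fin d) → ℝ}
    (hf : ContDiff ℝ 1 f) (hfc : HasCompactSupport f) {ε : ℝ} (hε : 0 < ε) :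
    ∫ y, fderiv ℝ f y y / (‖y‖ ^ 2 + ε) =
      -∫ y, f y * (d / (‖y‖ ^ 2 + ε) - 2 * ‖y‖ ^ 2 / (‖y‖ ^ 2 + ε) ^ 2) := by
  have hpos (y : EuclideanSpace ℝ (Fin d)) : ‖y‖ ^ 2 + ε ≠ 0 := by positivity
  let e (j : Fin d) : EuclideanSpace ℝ (Fin d) := EuclideanSpace.single j 1
  let v (j : Fin d) (y : EuclideanSpace ℝ (Fin d)) : ℝ := y j * (‖y‖ ^ 2 + ε)⁻¹
  have hv (j : Fin d) : ContDiff ℝ 1 (v j) := by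
    have h1 : ContDiff ℝ 1 fun y : EuclideanSpace ℝ (Fin d) => y j := by fun_prop
    exact h1.mul (((contDiff_norm_sq ℝ).add contDiff_const).inv hpos)
  have hv' (j : Fin d) (y : EuclideanSpace ℝ (Fin d)) :
      fderiv ℝ (v j) y (e j) = 1 / (‖y‖ ^ 2 + ε) - 2 * y j ^ 2 / (‖y‖ ^ 2 + ε) ^ 2 := by
    have h1 : HasFDerivAt (fun y : EuclideanSpace ℝ (Fin d) => y j)
        (EuclideanSpace.proj j : EuclideanSpace ℝ (Fin d) →L[ℝ] ℝ) y :=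
      (EuclideanSpace.proj j : EuclideanSpace ℝ (Fin d) →L[ℝ] ℝ).hasFDerivAt
    have h2 := ((hasStrictFDerivAt_norm_sq y).hasFDerivAt.add_const ε)
    have h3 := h1.mul ((hasDerivAt_inv (hpos y)).comp_hasFDerivAt y h2)
    rw [show fderiv ℝ (v j) y = _ from h3.fderiv]
    have := hpos y
    simp [e, EuclideanSpace.inner_single_right]
    field_simp
    ring
  have hf' (j : Fin d) : Continuous fun y => fderiv ℝ f y (e j) :=
    (hf.continuous_fderiv one_ne_zero).clm_apply continuous_const
  have hfc' (j : Fin d) : HasCompactSupport fun y => fderiv ℝ f y (e j) :=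
    hfc.fderiv_apply ℝ (e j)
  have hvd (j : Fin d) : Continuous fun y => fderiv ℝ (v j) y (e j) :=
    ((hv j).continuous_fderiv one_ne_zero).clm_apply continuous_const
  have i1 (j : Fin d) : Integrable fun y => fderiv ℝ f y (e j) * v j y :=
    ((hf' j).mul (hv j).continuous).integrable_of_hasCompactSupport (hfc' j).mul_right
  have i2 (j : Fin d) : Integrable fun y => f y * fderiv ℝ (v j) y (e j) :=
    (hf.continuous.mul (hvd j)).integrable_of_hasCompactSupport hfc.mul_right
  have i3 (j : Fin d) : Integrable fun y => f y * v j y :=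
    (hf.continuous.mul (hv j).continuous).integrable_of_hasCompactSupport hfc.mul_right
  have key (j : Fin d) := integral_mul_fderiv_eq_neg_fderiv_mul_of_integrable (i1 j) (i2 j) (i3 j)
    (fun x _ => hf.differentiable one_ne_zero x) (fun x _ => (hv j).differentiable one_ne_zero x)
  have e1 : (fun y => fderiv ℝ f y y / (‖y‖ ^ 2 + ε)) =
      fun y => ∑ j, fderiv ℝ f y (e j) * v j y := by
    ext y
    rw [ContinuousLinearMap.apply_eq_sum_single, Finset.sum_div]
    exact Finset.sum_congr rfl fun j _ => by simp only [v, e, smul_eq_mul]; ring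
  have e2 : (fun y => f y * (d / (‖y‖ ^ 2 + ε) - 2 * ‖y‖ ^ 2 / (‖y‖ ^ 2 + ε) ^ 2)) =
      fun y => ∑ j, f y * fderiv ℝ (v j) y (e j) := by
    ext y
    simp only [hv']
    rw [← Finset.mul_sum, Finset.sum_sub_distrib, ← Finset.sum_div, ← Finset.sum_div,
      ← Finset.mul_sum, EuclideanSpace.real_norm_sq_eq]
    simp
  rw [e1, e2, integral_finsetSum _ fun j _ => i1 j, integral_finsetSum _ fun j _ => i2 j,
    ← Finset.sum_neg_distrib]
  exact Finset.sum_congr rfl fun j _ => by rw [key j, neg_neg]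

theorem HasCompactSupport.fderiv_apply_self {E F : Type*} [NormedAddCommGroup E] [NormedSpace ℝ E]
    [NormedAddCommGroup F] [NormedSpace ℝ F] {f : E → F} (hf : HasCompactSupport f) :
    HasCompactSupport fun y => fderiv ℝ f y y :=
  (hf.fderiv ℝ).mono fun y hy h => hy (by simp [h])

/-- Integration by parts against the singular vector field `y / ‖y‖²`. -/
theorem integral_fderiv_self_div_norm_sq {d : ℕ} (hd : 3 ≤ d) {f : EuclideanSpace ℝ (Fin d) → ℝ}
    (hf : ContDiff ℝ 1 f) (hfc : HasCompactSupport f) :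
    ∫ y, fderiv ℝ f y y / ‖y‖ ^ 2 = -((d - 2) * ∫ y, f y / ‖y‖ ^ 2) := by
  have hdim : 3 ≤ Module.finrank ℝ (EuclideanSpace ℝ (Fin d)) := by
    rw [finrank_euclideanSpace_fin]; omega
  have : Nontrivial (EuclideanSpace ℝ (Fin d)) :=
    Module.nontrivial_of_finrank_pos (R := ℝ) (by omega)
  have hcont : Continuous fun y => fderiv ℝ f y y :=
    (hf.continuous_fderiv one_ne_zero).clm_apply continuous_id
  have hint := integrable_div_norm_sq (μ := volume) hdim hcont hfc.fderiv_apply_self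
  have hint' := integrable_div_norm_sq (μ := volume) hdim hf.continuous hfc
  have hne : ∀ᵐ y : EuclideanSpace ℝ (Fin d), y ≠ 0 := Measure.ae_ne volume 0
  let ε (n : ℕ) : ℝ := 1 / ((n : ℝ) + 1)
  have hε (n : ℕ) : 0 < ε n := Nat.one_div_pos_of_nat
  have hlim (y : EuclideanSpace ℝ (Fin d)) :
      Filter.Tendsto (fun n => ‖y‖ ^ 2 + ε n) Filter.atTop (nhds (‖y‖ ^ 2)) := by
    simpa [ε] using (tendsto_one_div_add_atTop_nhds_zero_nat (𝕜 := ℝ)).const_add (‖y‖ ^ 2)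
  have h1 : Filter.Tendsto (fun n => ∫ y, fderiv ℝ f y y / (‖y‖ ^ 2 + ε n)) Filter.atTop
      (nhds (∫ y, fderiv ℝ f y y / ‖y‖ ^ 2)) := by
    refine tendsto_integral_of_dominated_convergence _
      (fun n => (hcont.measurable.div (by fun_prop)).aestronglyMeasurable) hint.norm
      (fun n => ?_) ?_
    · filter_upwards [hne] with y hy
      have hy' : 0 < ‖y‖ := norm_pos_iff.2 hy
      have := hε n
      rw [norm_div, norm_div, Real.norm_of_nonneg (by positivity : 0 ≤ ‖y‖ ^ 2 + ε n),
        Real.norm_of_nonneg (by positivity : 0 ≤ ‖y‖ ^ 2)]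
      gcongr
      linarith
    · filter_upwards [hne] with y hy
      exact tendsto_const_nhds.div (hlim y) (by simpa using hy)
  have h2 : Filter.Tendsto (fun n => ∫ y, f y *
      (d / (‖y‖ ^ 2 + ε n) - 2 * ‖y‖ ^ 2 / (‖y‖ ^ 2 + ε n) ^ 2)) Filter.atTop
      (nhds (∫ y, (d - 2) * (f y / ‖y‖ ^ 2))) := by
    refine tendsto_integral_of_dominated_convergence (fun y => (d + 2) * ‖f y / ‖y‖ ^ 2‖)
      (fun n => (hf.continuous.measurable.mul (by fun_prop)).aestronglyMeasurable)
      (hint'.norm.const_mul _) (fun n => ?_) ?_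
    · filter_upwards [hne] with y hy
      have hy' : 0 < ‖y‖ := norm_pos_iff.2 hy
      have := hε n
      have hb1 : |(d : ℝ) / (‖y‖ ^ 2 + ε n)| ≤ d / ‖y‖ ^ 2 := by
        rw [abs_of_nonneg (by positivity)]
        gcongr
        linarith
      have hb2 : |2 * ‖y‖ ^ 2 / (‖y‖ ^ 2 + ε n) ^ 2| ≤ 2 / ‖y‖ ^ 2 := by
        rw [abs_of_nonneg (by positivity), div_le_div_iff₀ (by positivity) (by positivity)]
        nlinarith [mul_pos (pow_pos hy' 2) this, sq_nonneg (ε n)]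
      rw [norm_mul, norm_div, norm_pow, norm_norm, Real.norm_eq_abs (_ - _)]
      calc ‖f y‖ * _ ≤ ‖f y‖ * (d / ‖y‖ ^ 2 + 2 / ‖y‖ ^ 2) := by
            gcongr
            exact (abs_sub _ _).trans (add_le_add hb1 hb2)
        _ = _ := by ring
    · filter_upwards [hne] with y hy
      have hy' : ‖y‖ ≠ 0 := norm_ne_zero_iff.2 hy
      have := ((tendsto_const_nhds (x := (d : ℝ))).div (hlim y) (pow_ne_zero 2 hy')).sub
        ((tendsto_const_nhds (x := 2 * ‖y‖ ^ 2)).div ((hlim y).pow 2)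
          (pow_ne_zero 2 (pow_ne_zero 2 hy')))
      have hval : f y * (d / ‖y‖ ^ 2 - 2 * ‖y‖ ^ 2 / (‖y‖ ^ 2) ^ 2) =
          (d - 2) * (f y / ‖y‖ ^ 2) := by
        field_simp
      exact hval ▸ this.const_mul (f y)
  rw [integral_const_mul] at h2
  refine tendsto_nhds_unique h1 (h2.neg.congr fun n => ?_)
  rw [integral_fderiv_self_div_norm_sq_add hf hfc (hε n)]

/-- The magnetic derivative `∂_j ψ − i a_j ψ` for the vector potential `a`. -/
noncomputable def magneticDeriv {d : ℕ}
    (a : EuclideanSpace ℝ (Fin d) → EuclideanSpace ℝ (Fin d))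
    (ψ : EuclideanSpace ℝ (Fin d) → ℂ) (j : Fin d) (y : EuclideanSpace ℝ (Fin d)) : ℂ :=
  fderiv ℝ ψ y (EuclideanSpace.single j (1 : ℝ)) - Complex.I * (a y j : ℝ) * ψ y

/-- The energy density `|(∇ − ia)ψ + (d − 2)/2 · y/|y|² ψ|²` of the ground state representation of
the magnetic Hardy form. -/
noncomputable def groundStateDensity {d : ℕ}
    (a : EuclideanSpace ℝ (Fin d) → EuclideanSpace ℝ (Fin d))
    (ψ : EuclideanSpace ℝ (Fin d) → ℂ) (y : EuclideanSpace ℝ (Fin d)) : ℝ :=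
  ∑ j, ‖magneticDeriv a ψ j y + ((d - 2 : ℝ) / 2 * (y j / ‖y‖ ^ 2) : ℝ) * ψ y‖ ^ 2

section

variable {d : ℕ} {a b : EuclideanSpace ℝ (Fin d) → EuclideanSpace ℝ (Fin d)}
  {ψ : EuclideanSpace ℝ (Fin d) → ℂ}

theorem groundStateDensity_nonneg (y : EuclideanSpace ℝ (Fin d)) :
    0 ≤ groundStateDensity a ψ y :=
  Finset.sum_nonneg fun _ _ => by positivity

theorem groundStateDensity_eq {y : EuclideanSpace ℝ (Fin d)} (hψ : DifferentiableAt ℝ ψ y) :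
    groundStateDensity a ψ y = ∑ j, ‖magneticDeriv a ψ j y‖ ^ 2 +
      (d - 2 : ℝ) / 2 * (fderiv ℝ (fun y => ‖ψ y‖ ^ 2) y y / ‖y‖ ^ 2) +
      ((d - 2 : ℝ) / 2) ^ 2 * (‖ψ y‖ ^ 2 / ‖y‖ ^ 2) := by
  have hpt (z w : ℂ) (r t : ℝ) : ‖z - Complex.I * r * w + t * w‖ ^ 2 =
      ‖z - Complex.I * r * w‖ ^ 2 + 2 * t * inner ℝ w z + t ^ 2 * ‖w‖ ^ 2 := by
    simp only [Complex.sq_norm, Complex.normSq_apply, Complex.inner]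
    simp
    ring
  have hw : ∑ j, (y j / ‖y‖ ^ 2) ^ 2 = 1 / ‖y‖ ^ 2 := by
    simp only [div_pow]
    rw [← Finset.sum_div, ← EuclideanSpace.real_norm_sq_eq]
    rcases eq_or_ne ‖y‖ 0 with h | h
    · simp [h]
    · field_simp
  have hf : fderiv ℝ (fun y => ‖ψ y‖ ^ 2) y y =
      2 * ∑ j, y j * inner ℝ (ψ y) (fderiv ℝ ψ y (EuclideanSpace.single j 1)) := by
    rw [hψ.hasFDerivAt.norm_sq.fderiv]
    simp only [smul_apply, ContinuousLinearMap.comp_apply, innerSL_apply_apply]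
    rw [ContinuousLinearMap.apply_eq_sum_single, inner_sum]
    simp only [real_inner_smul_right, nsmul_eq_mul, Nat.cast_ofNat]
  simp only [groundStateDensity, magneticDeriv, hpt]
  rw [Finset.sum_add_distrib, Finset.sum_add_distrib, ← Finset.sum_mul, hf]
  simp only [mul_pow ((d - 2 : ℝ) / 2)]
  rw [← Finset.mul_sum, hw, Finset.mul_sum, Finset.sum_div, Finset.mul_sum]
  congr 1
  · congr 1
    exact Finset.sum_congr rfl fun j _ => by ring
  · ring

theorem integrable_sum_magneticDeriv_sq (ha : Continuous a) (hψ : ContDiff ℝ 1 ψ)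
    (hψc : HasCompactSupport ψ) :
    Integrable fun y => ∑ j, ‖magneticDeriv a ψ j y‖ ^ 2 := by
  refine integrable_finsetSum _ fun j _ => ?_
  have hcont : Continuous fun y => magneticDeriv a ψ j y := by
    have h1 : Continuous fun y => fderiv ℝ ψ y (EuclideanSpace.single j (1 : ℝ)) :=
      (hψ.continuous_fderiv one_ne_zero).clm_apply continuous_const
    have h2 := hψ.continuous
    have h3 : Continuous fun y => a y j := (EuclideanSpace.proj (𝕜 := ℝ) j).continuous.comp ha
    exact h1.sub ((continuous_const.mul (Complex.continuous_ofReal.comp h3)).mul h2)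
  have hcont' : Continuous fun y => ‖magneticDeriv a ψ j y‖ ^ 2 := hcont.norm.pow 2
  refine hcont'.integrable_of_hasCompactSupport
    (HasCompactSupport.intro hψc.isCompact fun y hy => ?_)
  simp [magneticDeriv, fderiv_of_notMem_tsupport ℝ hy, image_eq_zero_of_notMem_tsupport hy]

theorem hasCompactSupport_norm_sq (hψc : HasCompactSupport ψ) :
    HasCompactSupport fun y => ‖ψ y‖ ^ 2 :=
  hψc.comp_left (g := fun z : ℂ => ‖z‖ ^ 2) (by simp)

theorem integrable_groundStateDensity (hd : 2 ≤ d) (ha : Continuous a) (hψ : ContDiff ℝ 1 ψ)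
    (hψc : HasCompactSupport ψ) : Integrable (groundStateDensity a ψ) := by
  have hD := integrable_sum_magneticDeriv_sq ha hψ hψc
  rw [show groundStateDensity a ψ = _ from
    funext fun y => groundStateDensity_eq (hψ.differentiable one_ne_zero y)]
  obtain rfl | hd := hd.eq_or_lt
  · simpa using hD
  have hdim : 3 ≤ Module.finrank ℝ (EuclideanSpace ℝ (Fin d)) := by
    rw [finrank_euclideanSpace_fin]; omega
  have hf : ContDiff ℝ 1 fun y => ‖ψ y‖ ^ 2 := hψ.norm_sq ℝ
  have hfc := hasCompactSupport_norm_sq hψc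
  exact (hD.add ((integrable_div_norm_sq hdim
    ((hf.continuous_fderiv one_ne_zero).clm_apply continuous_id)
    hfc.fderiv_apply_self).const_mul _)).add
    ((integrable_div_norm_sq hdim hf.continuous hfc).const_mul _)

/-- Ground state representation of the magnetic Hardy form. -/
theorem integral_groundStateDensity (hd : 2 ≤ d) (ha : Continuous a) (hψ : ContDiff ℝ 1 ψ)
    (hψc : HasCompactSupport ψ) :
    ∫ y, groundStateDensity a ψ y = (∫ y, ∑ j, ‖magneticDeriv a ψ j y‖ ^ 2) -
      ((d - 2 : ℝ) / 2) ^ 2 * ∫ y, ‖ψ y‖ ^ 2 / ‖y‖ ^ 2 := by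
  have hD := integrable_sum_magneticDeriv_sq ha hψ hψc
  simp only [fun y => groundStateDensity_eq (a := a) (hψ.differentiable one_ne_zero y)]
  obtain rfl | hd := hd.eq_or_lt
  · simp
  have hdim : 3 ≤ Module.finrank ℝ (EuclideanSpace ℝ (Fin d)) := by
    rw [finrank_euclideanSpace_fin]; omega
  have hf : ContDiff ℝ 1 fun y => ‖ψ y‖ ^ 2 := hψ.norm_sq ℝ
  have hfc := hasCompactSupport_norm_sq hψc
  have i1 : Integrable fun y => (d - 2 : ℝ) / 2 *
      (fderiv ℝ (fun y => ‖ψ y‖ ^ 2) y y / ‖y‖ ^ 2) := (integrable_div_norm_sq hdim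
    ((hf.continuous_fderiv one_ne_zero).clm_apply continuous_id)
    hfc.fderiv_apply_self).const_mul _
  have i2 := (integrable_div_norm_sq (μ := volume) hdim hf.continuous hfc).const_mul
    (((d - 2 : ℝ) / 2) ^ 2)
  rw [integral_add (by exact hD.add i1) i2, integral_add hD i1, integral_const_mul, integral_const_mul,
    integral_fderiv_self_div_norm_sq hd hf hfc]
  ring

theorem groundStateDensity_le {K : ℝ} {y : EuclideanSpace ℝ (Fin d)} (hK : ‖a y - b y‖ ≤ K) :
    groundStateDensity a ψ y ≤ 2 * groundStateDensity b ψ y + 2 * K ^ 2 * ‖ψ y‖ ^ 2 := by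
  have hpt (z w : ℂ) : ‖z + w‖ ^ 2 ≤ 2 * ‖z‖ ^ 2 + 2 * ‖w‖ ^ 2 := by
    nlinarith [norm_add_le z w, norm_nonneg (z + w), sq_nonneg (‖z‖ - ‖w‖)]
  calc groundStateDensity a ψ y
      ≤ ∑ j, (2 * ‖magneticDeriv b ψ j y + ((d - 2 : ℝ) / 2 * (y j / ‖y‖ ^ 2) : ℝ) * ψ y‖ ^ 2 +
          2 * ((a y - b y) j ^ 2 * ‖ψ y‖ ^ 2)) := by
        refine Finset.sum_le_sum fun j _ => ?_
        have hn : ‖-Complex.I * ((a y - b y) j : ℝ) * ψ y‖ ^ 2 = (a y - b y) j ^ 2 * ‖ψ y‖ ^ 2 := by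
          rw [norm_mul, norm_mul, norm_neg, Complex.norm_I, Complex.norm_real, one_mul, mul_pow,
            Real.norm_eq_abs, sq_abs]
        rw [← hn]
        refine le_of_eq_of_le ?_ (hpt _ _)
        congr 2
        · simp only [magneticDeriv, PiLp.sub_apply]
          push_cast
          ring
    _ = 2 * groundStateDensity b ψ y + 2 * ‖a y - b y‖ ^ 2 * ‖ψ y‖ ^ 2 := by
        rw [Finset.sum_add_distrib, ← Finset.mul_sum, ← Finset.mul_sum, ← Finset.sum_mul,
          ← EuclideanSpace.real_norm_sq_eq, groundStateDensity, mul_assoc]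
    _ ≤ _ := by gcongr

end

section

variable {d : ℕ} {A B : EuclideanSpace ℝ (Fin d) → EuclideanSpace ℝ (Fin d)} {s t : ℝ}
  {ψ : EuclideanSpace ℝ (Fin d) → ℂ}

theorem lsForm_eq (hd : 2 ≤ d) (hA : Continuous A) (hψ : ContDiff ℝ 1 ψ)
    (hψc : HasCompactSupport ψ) :
    lsForm d A s ψ = (∫ y, groundStateDensity (fun y => exp (s / 2) • A (exp (s / 2) • y)) ψ y) +
      1 / 16 * ∫ y, ‖y‖ ^ 2 * ‖ψ y‖ ^ 2 := by
  rw [integral_groundStateDensity hd (by fun_prop) hψ hψc]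
  simp [lsForm, magneticDeriv]

theorem lsForm_nonneg (hd : 2 ≤ d) (hA : Continuous A) (hψ : ContDiff ℝ 1 ψ)
    (hψc : HasCompactSupport ψ) : 0 ≤ lsForm d A s ψ := by
  rw [lsForm_eq hd hA hψ hψc]
  have h1 : 0 ≤ ∫ y, groundStateDensity (fun y => exp (s / 2) • A (exp (s / 2) • y)) ψ y :=
    integral_nonneg fun y => groundStateDensity_nonneg y
  positivity

theorem lsForm_add_le (hd : 2 ≤ d) (hA : Continuous A) (hB : Continuous B) (hψ : ContDiff ℝ 1 ψ)
    (hψc : HasCompactSupport ψ) {K : ℝ}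
    (hK : ∀ y, ‖exp (s / 2) • A (exp (s / 2) • y) - exp (t / 2) • B (exp (t / 2) • y)‖ ≤ K) :
    lsForm d A s ψ + ∫ y, ‖ψ y‖ ^ 2 ≤
      (2 + 2 * K) ^ 2 * (lsForm d B t ψ + ∫ y, ‖ψ y‖ ^ 2) := by
  have hK0 : 0 ≤ K := (norm_nonneg _).trans (hK 0)
  have hl := lsForm_nonneg (s := t) hd hB hψ hψc
  have hm : 0 ≤ ∫ y, ‖ψ y‖ ^ 2 := by positivity
  have hh : 0 ≤ ∫ y, ‖y‖ ^ 2 * ‖ψ y‖ ^ 2 := by positivity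
  have hi : Integrable fun y => ‖ψ y‖ ^ 2 :=
    (hψ.continuous.norm.pow 2).integrable_of_hasCompactSupport (hasCompactSupport_norm_sq hψc)
  have hgA := integrable_groundStateDensity (a := fun y => exp (s / 2) • A (exp (s / 2) • y))
    hd (by fun_prop) hψ hψc
  have hgB := integrable_groundStateDensity (a := fun y => exp (t / 2) • B (exp (t / 2) • y))
    hd (by fun_prop) hψ hψc
  have key := integral_mono hgA ((hgB.const_mul 2).add (hi.const_mul (2 * K ^ 2)))
    fun y => groundStateDensity_le (hK y)
  simp only [Pi.add_apply] at key
  rw [integral_add (hgB.const_mul 2) (hi.const_mul _), integral_const_mul,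
    integral_const_mul] at key
  have hA' := lsForm_eq (s := s) hd hA hψ hψc
  have hB' := lsForm_eq (s := t) hd hB hψ hψc
  have hlin : lsForm d A s ψ + ∫ y, ‖ψ y‖ ^ 2 ≤
      2 * lsForm d B t ψ + (2 * K ^ 2 + 1) * ∫ y, ‖ψ y‖ ^ 2 := by
    linarith
  have c1 : 2 ≤ (2 + 2 * K) ^ 2 := by nlinarith
  have c2 : 2 * K ^ 2 + 1 ≤ (2 + 2 * K) ^ 2 := by nlinarith
  nlinarith [mul_le_mul_of_nonneg_right c1 hl, mul_le_mul_of_nonneg_right c2 hm]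

end

theorem stmt12 (d : ℕ) (hd : 2 ≤ d)
    (A : EuclideanSpace ℝ (Fin d) → EuclideanSpace ℝ (Fin d))
    (hA : ContDiff ℝ (⊤ : ℕ∞) A) (hAbd : ∃ M : ℝ, ∀ x, ‖A x‖ ≤ M) :
    ((∀ s : ℝ, 0 ≤ s → ∀ ψ : EuclideanSpace ℝ (Fin d) → ℂ,
        ContDiff ℝ (⊤ : ℕ∞) ψ → HasCompactSupport ψ → 0 ≤ lsForm d A s ψ) ∧
     (∀ ψ : EuclideanSpace ℝ (Fin d) → ℂ,
        ContDiff ℝ (⊤ : ℕ∞) ψ → HasCompactSupport ψ → 0 ≤ lsForm d (fun _ => 0) 0 ψ)) ∧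
    (∀ s : ℝ, 0 ≤ s → ∃ C : ℝ, 1 ≤ C ∧
      ∀ ψ : EuclideanSpace ℝ (Fin d) → ℂ, ContDiff ℝ (⊤ : ℕ∞) ψ → HasCompactSupport ψ →
        (C^2)⁻¹ * (lsForm d (fun _ => 0) 0 ψ + ∫ y, ‖ψ y‖^2)
            ≤ lsForm d A s ψ + ∫ y, ‖ψ y‖^2 ∧
        lsForm d A s ψ + ∫ y, ‖ψ y‖^2
            ≤ C^2 * (lsForm d (fun _ => 0) 0 ψ + ∫ y, ‖ψ y‖^2)) := by
  obtain ⟨M, hM⟩ := hAbd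
  have hone : ((1 : ℕ∞) : WithTop ℕ∞) ≤ ((⊤ : ℕ∞) : WithTop ℕ∞) := by exact_mod_cast le_top
  have hz : Continuous fun _ : EuclideanSpace ℝ (Fin d) => (0 : EuclideanSpace ℝ (Fin d)) :=
    continuous_const
  refine ⟨⟨fun s _ ψ hψ hψc => lsForm_nonneg hd hA.continuous (hψ.of_le hone) hψc,
    fun ψ hψ hψc => lsForm_nonneg hd hz (hψ.of_le hone) hψc⟩, fun s _ => ?_⟩
  have hM0 : 0 ≤ M := (norm_nonneg _).trans (hM 0)
  have hbd (y : EuclideanSpace ℝ (Fin d)) :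
      ‖exp (s / 2) • A (exp (s / 2) • y)‖ ≤ exp (s / 2) * M := by
    rw [norm_smul, Real.norm_of_nonneg (exp_pos _).le]
    gcongr
    exact hM _
  have hK0 : 0 ≤ exp (s / 2) * M := by positivity
  refine ⟨2 + 2 * (exp (s / 2) * M), by linarith, fun ψ hψ hψc => ⟨?_, ?_⟩⟩
  · rw [inv_mul_le_iff₀ (by positivity)]
    exact lsForm_add_le hd hz hA.continuous (hψ.of_le hone) hψc fun y => by simpa using hbd y
  · exact lsForm_add_le hd hA.continuous hz (hψ.of_le hone) hψc fun y => by simpa using hbd y
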